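/- Let I and J be nontrivial compact intervals of ℝ with J ⊆ I. Then λ(V^I(J)) = log(|I|/|J|), where λ is the measure y^{-2} dx dy on the upper half-plane, V^I(J) = V(J) \ V(I), V(K) = ⋂_{t∈K} V(t), and V(t) = {(x,y) : y > 0, −y/2 < x − t ≤ y/2}. -/

import Mathlib

open MeasureTheory Set

/-- The measure `y⁻² dx dy` on the upper half-plane `{(x,y) : 0 < y}`. -/
noncomputable def lambdaH : Measure (ℝ × ℝ) :=
  (volume.restrict {p : ℝ × ℝ | 0 < p.2}).withDensity fun p => ENNReal.ofReal (p.2 ^ (-2 : ℝ))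

/-- The cone `V(t) = {(x,y) : 0 < y, -y/2 < x - t ≤ y/2}`. -/
def cone (t : ℝ) : Set (ℝ × ℝ) :=
  {p | 0 < p.2 ∧ -p.2 / 2 < p.1 - t ∧ p.1 - t ≤ p.2 / 2}

/-- `V(K) = ⋂ t ∈ K, V(t)`. -/
def coneOf (K : Set ℝ) : Set (ℝ × ℝ) := ⋂ t ∈ K, cone t

/-! In horizontal slices, `V(K)` at height `y` is an interval of length `(y - |K|)⁺`, so the slice
of `V(J) \ V(I)` has length `(y - |J|)⁺ - (y - |I|)⁺`, which is the length of
`(|J|, |I|] ∩ (-∞, y]`. By Tonelli the measure is therefore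
`∫ s in (|J|, |I|], ∫ y in [s, ∞), y⁻² = ∫ s in (|J|, |I|], s⁻¹`. -/

section Integrals

lemma lintegral_measure_Iic_eq_lintegral_measure_Ici {α : Type*} [LinearOrder α]
    [TopologicalSpace α] [OrderClosedTopology α] [SecondCountableTopology α] [MeasurableSpace α]
    [OpensMeasurableSpace α] (μ ν : Measure α) [SFinite μ] [SFinite ν] :
    ∫⁻ y, ν (Iic y) ∂μ = ∫⁻ s, μ (Ici s) ∂ν := by
  have hmeas : MeasurableSet {p : α × α | p.2 ≤ p.1} :=
    measurableSet_le measurable_snd measurable_fst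
  calc ∫⁻ y, ν (Iic y) ∂μ = μ.prod ν {p | p.2 ≤ p.1} := (Measure.prod_apply hmeas).symm
    _ = ∫⁻ s, μ (Ici s) ∂ν := Measure.prod_apply_symm hmeas

lemma lintegral_Ioi_rpow_of_lt {r s : ℝ} (hr : r < -1) (hs : 0 < s) :
    ∫⁻ y in Ioi s, ENNReal.ofReal (y ^ r) = ENNReal.ofReal (-s ^ (r + 1) / (r + 1)) := by
  rw [← integral_Ioi_rpow_of_lt hr hs,
    ofReal_integral_eq_lintegral_ofReal (integrableOn_Ioi_rpow_of_lt hr hs)]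
  filter_upwards [ae_restrict_mem measurableSet_Ioi] with y hy
  exact Real.rpow_nonneg (hs.trans hy).le r

lemma lintegral_Ioc_inv {l L : ℝ} (hl : 0 < l) (hL : l ≤ L) :
    ∫⁻ s in Ioc l L, ENNReal.ofReal s⁻¹ = ENNReal.ofReal (Real.log (L / l)) := by
  have hint : IntervalIntegrable (fun s : ℝ => s⁻¹) volume l L :=
    intervalIntegral.intervalIntegrable_inv (fun s hs => by
      rw [uIcc_of_le hL] at hs
      exact (hl.trans_le hs.1).ne') continuousOn_id
  rw [← integral_inv_of_pos hl (hl.trans_le hL), intervalIntegral.integral_of_le hL,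
    ofReal_integral_eq_lintegral_ofReal hint.1]
  filter_upwards [ae_restrict_mem measurableSet_Ioc] with s hs
  exact inv_nonneg.2 (hl.trans hs.1).le

lemma volume_restrict_Ioc_Iic {l L : ℝ} (hL : l ≤ L) (y : ℝ) :
    volume.restrict (Ioc l L) (Iic y) = ENNReal.ofReal (y - l) - ENNReal.ofReal (y - L) := by
  have hdiff : Iic y ∩ Ioc l L = Ioc l y \ Ioc L y := by
    ext x
    grind
  rw [Measure.restrict_apply measurableSet_Iic, hdiff,
    measure_sdiff (Ioc_subset_Ioc_left hL) measurableSet_Ioc.nullMeasurableSet (by simp),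
    Real.volume_Ioc, Real.volume_Ioc]

end Integrals

/-- The second marginal `y⁻² dy` on `(0, ∞)` in the factorization
`lambdaH = volume.prod heightMeasure`. -/
noncomputable def heightMeasure : Measure ℝ :=
  (volume.restrict (Ioi 0)).withDensity fun y => ENNReal.ofReal (y ^ (-2 : ℝ))

instance : SFinite heightMeasure := by
  unfold heightMeasure
  infer_instance

lemma heightMeasure_Ici {s : ℝ} (hs : 0 < s) : heightMeasure (Ici s) = ENNReal.ofReal s⁻¹ := by
  rw [heightMeasure, withDensity_apply _ measurableSet_Ici,
    Measure.restrict_restrict measurableSet_Ici, inter_eq_left.2 (Ici_subset_Ioi.2 hs),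
    setLIntegral_congr Ioi_ae_eq_Ici.symm, lintegral_Ioi_rpow_of_lt (by norm_num) hs]
  norm_num [Real.rpow_neg_one]

lemma lambdaH_eq_prod : lambdaH = volume.prod heightMeasure := by
  have hhalf : {p : ℝ × ℝ | 0 < p.2} = univ ×ˢ Ioi 0 := by
    ext p
    simp
  rw [lambdaH, heightMeasure, prod_withDensity_right (by fun_prop), hhalf,
    Measure.volume_eq_prod, ← Measure.prod_restrict, Measure.restrict_univ]

section Cones

variable {a b c d : ℝ}

lemma mem_coneOf_Icc (hcd : c ≤ d) {p : ℝ × ℝ} :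
    p ∈ coneOf (Icc c d) ↔ p.1 ∈ Ioc (d - p.2 / 2) (c + p.2 / 2) := by
  simp only [coneOf, cone, mem_iInter, mem_ofPred_eq, mem_Icc, mem_Ioc]
  constructor
  · intro h
    have hc := h c ⟨le_rfl, hcd⟩
    have hd := h d ⟨hcd, le_rfl⟩
    constructor <;> linarith
  · rintro ⟨hleft, hright⟩ t ⟨hct, htd⟩
    refine ⟨?_, ?_, ?_⟩ <;> linarith

lemma measurableSet_coneOf_Icc (hcd : c ≤ d) : MeasurableSet (coneOf (Icc c d)) := by
  have hcone : coneOf (Icc c d) = {p | d - p.2 / 2 < p.1} ∩ {p | p.1 ≤ c + p.2 / 2} :=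
    Set.ext fun _ => mem_coneOf_Icc hcd
  rw [hcone]
  exact (measurableSet_lt (by fun_prop) (by fun_prop)).inter
    (measurableSet_le (by fun_prop) (by fun_prop))

lemma preimage_coneOf_Icc (hcd : c ≤ d) (y : ℝ) :
    (fun x => (x, y)) ⁻¹' coneOf (Icc c d) = Ioc (d - y / 2) (c + y / 2) :=
  Set.ext fun _ => mem_coneOf_Icc hcd

lemma volume_preimage_coneOf_sdiff_coneOf (hcd : c ≤ d) (hac : a ≤ c) (hdb : d ≤ b) (y : ℝ) :
    volume ((fun x => (x, y)) ⁻¹' (coneOf (Icc c d) \ coneOf (Icc a b))) =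
      volume.restrict (Ioc (d - c) (b - a)) (Iic y) := by
  have hsub : Ioc (b - y / 2) (a + y / 2) ⊆ Ioc (d - y / 2) (c + y / 2) :=
    Ioc_subset_Ioc (by linarith) (by linarith)
  have hlength (u v : ℝ) : u + y / 2 - (v - y / 2) = y - (v - u) := by ring
  rw [preimage_sdiff, preimage_coneOf_Icc hcd, preimage_coneOf_Icc (hac.trans (hcd.trans hdb)),
    measure_sdiff hsub measurableSet_Ioc.nullMeasurableSet (by simp), Real.volume_Ioc,
    Real.volume_Ioc, hlength, hlength, volume_restrict_Ioc_Iic (by linarith)]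

end Cones

/-- For nontrivial compact intervals `J = [c,d] ⊆ I = [a,b]`,
`λ(V^I(J)) = λ(V(J) \ V(I)) = log(|I|/|J|)`. -/
theorem stmt_0 (a b c d : ℝ) (hab : a < b) (hcd : c < d) (hac : a ≤ c) (hdb : d ≤ b) :
    lambdaH (coneOf (Icc c d) \ coneOf (Icc a b)) =
      ENNReal.ofReal (Real.log ((b - a) / (d - c))) := by
  have hJ : 0 < d - c := sub_pos.2 hcd
  have hmeas : MeasurableSet (coneOf (Icc c d) \ coneOf (Icc a b)) :=
    (measurableSet_coneOf_Icc hcd.le).diff (measurableSet_coneOf_Icc hab.le)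
  calc lambdaH (coneOf (Icc c d) \ coneOf (Icc a b))
      = ∫⁻ y, volume.restrict (Ioc (d - c) (b - a)) (Iic y) ∂heightMeasure := by
        rw [lambdaH_eq_prod, Measure.prod_apply_symm hmeas]
        simp only [volume_preimage_coneOf_sdiff_coneOf hcd.le hac hdb]
    _ = ∫⁻ s in Ioc (d - c) (b - a), heightMeasure (Ici s) :=
        lintegral_measure_Iic_eq_lintegral_measure_Ici _ _
    _ = ∫⁻ s in Ioc (d - c) (b - a), ENNReal.ofReal s⁻¹ :=
        setLIntegral_congr_fun measurableSet_Ioc fun s hs => heightMeasure_Ici (hJ.trans hs.1)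
    _ = ENNReal.ofReal (Real.log ((b - a) / (d - c))) :=
        lintegral_Ioc_inv hJ (sub_le_sub hdb hac)
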